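/- Let G be a finite additive abelian group and X a subgroup of G. Let d be a positive integer such that every sequence f : Fin d → G⧸X contains a nonempty zero-sum subsequence, i.e., for every f there is a nonempty subset S ⊆ Fin d with ∑_{i∈S} f i = 0. Then for every ℓ and every sequence T : Fin ℓ → G, the number of subsets S ⊆ Fin ℓ (including the empty set) with ∑_{i∈S} T i ∈ X is at least 2^(ℓ − d + 1), where the exponent is interpreted via truncated (natural-number) subtraction. -/

import Mathlib

/-!
A sum lies in `X` exactly when it vanishes in `G ⧸ X`, so consider sequences over `G ⧸ X`. Negating
the terms indexed by `B` turns the subsets with sum zero into the subsets having the same sum as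
`B`, through `S ↦ S ∆ B`. Hence a lower bound for the number of zero-sum subsets that is uniform
over all sequences of a given length also bounds the number of subsets with any attained sum.

Now induct on the index set `U`. If `#U < d`, one subset suffices. Otherwise some nonempty `A ⊆ U`
has sum zero; fix `i ∈ A`. The zero-sum subsets avoiding `i` correspond to the subsets of
`U.erase i` with sum `0`, those containing `i` to the ones with sum `-f i`. Both sums are attained
in `U.erase i`, by `∅` and `A.erase i`, so the bound doubles.
-/

open Finset
open scoped symmDiff

/-- `d` is at least the Davenport constant of `H`: every sequence of length `d` over `H` has a
nonempty zero-sum subsequence. -/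
def IsDavenportBound (H : Type*) [AddCommMonoid H] (d : ℕ) : Prop :=
  ∀ f : Fin d → H, ∃ S : Finset (Fin d), S.Nonempty ∧ ∑ i ∈ S, f i = 0

/-- The subsets of `U` over which `f` sums to `a`. Subsequences are encoded by their index sets, so
that repeated terms of a sequence are told apart. -/
def subsetsWithSum {ι H : Type*} [AddCommMonoid H] [DecidableEq H] (f : ι → H) (U : Finset ι)
    (a : H) : Finset (Finset ι) :=
  {S ∈ U.powerset | ∑ i ∈ S, f i = a}

theorem mem_subsetsWithSum {ι H : Type*} [AddCommMonoid H] [DecidableEq H] {f : ι → H}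
    {U S : Finset ι} {a : H} : S ∈ subsetsWithSum f U a ↔ S ⊆ U ∧ ∑ i ∈ S, f i = a := by
  rw [subsetsWithSum, mem_filter, mem_powerset]

theorem IsDavenportBound.exists_nonempty_subset_sum_eq_zero {ι H : Type*} [AddCommMonoid H]
    {d : ℕ} (hd : IsDavenportBound H d) {U : Finset ι} (hU : d ≤ #U) (f : ι → H) :
    ∃ A ⊆ U, A.Nonempty ∧ ∑ i ∈ A, f i = 0 := by
  obtain ⟨e⟩ : Nonempty (Fin d ↪ U) := Function.Embedding.nonempty_of_card_le (by simpa using hU)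
  obtain ⟨S, hS, hsum⟩ := hd fun k => f (e k)
  refine ⟨S.map (e.trans (.subtype _)), ?_, hS.map, (sum_map ..).trans hsum⟩
  intro j hj
  obtain ⟨k, -, rfl⟩ := mem_map.1 hj
  exact (e k).2

section

variable {ι H : Type*} [DecidableEq ι] [AddCommGroup H]

theorem sum_symmDiff_eq_sum_piecewise_neg_add (f : ι → H) (S B : Finset ι) :
    ∑ i ∈ S ∆ B, f i = ∑ i ∈ S, B.piecewise (-f) f i + ∑ i ∈ B, f i :=
  calc
    ∑ i ∈ S ∆ B, f i = ∑ i ∈ S \ B, f i + ∑ i ∈ B \ S, f i :=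
      sum_union disjoint_sdiff_sdiff
    _ = (-∑ i ∈ S ∩ B, f i + ∑ i ∈ S \ B, f i) + (∑ i ∈ B ∩ S, f i + ∑ i ∈ B \ S, f i) := by
      rw [inter_comm B S]
      abel
    _ = ∑ i ∈ S, B.piecewise (-f) f i + ∑ i ∈ B, f i := by
      simp only [sum_piecewise, Pi.neg_apply, sum_neg_distrib, sum_inter_add_sum_sdiff]

variable [DecidableEq H]

theorem card_subsetsWithSum_piecewise_neg (f : ι → H) {U B : Finset ι} (hB : B ⊆ U) (a : H) :
    #(subsetsWithSum (B.piecewise (-f) f) U a) = #(subsetsWithSum f U (a + ∑ i ∈ B, f i)) := by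
  refine card_equiv (symmDiff_left_involutive B).toPerm fun S => ?_
  have hsubset : S ∆ B ⊆ U ↔ S ⊆ U := by grind [mem_symmDiff]
  simp only [mem_subsetsWithSum, Function.Involutive.coe_toPerm, hsubset,
    sum_symmDiff_eq_sum_piecewise_neg_add, add_left_inj]

theorem card_subsetsWithSum_insert (f : ι → H) {U : Finset ι} {i : ι} (hi : i ∉ U) (a : H) :
    #(subsetsWithSum f (insert i U) a) =
      #(subsetsWithSum f U a) + #(subsetsWithSum f U (a - f i)) := by
  simp only [subsetsWithSum, card_filter, sum_powerset_insert hi]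
  congr 1
  refine sum_congr rfl fun S hS => ?_
  simp only [sum_insert (notMem_mono (mem_powerset.1 hS) hi), eq_sub_iff_add_eq']

end

theorem IsDavenportBound.two_pow_le_card_subsetsWithSum {ι H : Type*} [AddCommGroup H]
    [DecidableEq H] {d : ℕ} (hd : IsDavenportBound H d) (f : ι → H) {U B : Finset ι} (hB : B ⊆ U) :
    2 ^ (#U + 1 - d) ≤ #(subsetsWithSum f U (∑ i ∈ B, f i)) := by
  classical
  induction U using Finset.strongInduction generalizing f B with
  | H U ih =>
    obtain hlt | hle := lt_or_ge #U d
    · rw [Nat.sub_eq_zero_of_le hlt, pow_zero]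
      exact card_pos.2 ⟨B, mem_subsetsWithSum.2 ⟨hB, rfl⟩⟩
    rw [← zero_add (∑ i ∈ B, f i), ← card_subsetsWithSum_piecewise_neg f hB]
    generalize B.piecewise (-f) f = g
    obtain ⟨A, hAU, ⟨i, hiA⟩, hA⟩ := hd.exists_nonempty_subset_sum_eq_zero hle g
    have hiU : i ∈ U := hAU hiA
    have hsum : ∑ j ∈ A.erase i, g j = 0 - g i := by rw [sum_erase_eq_sub hiA, hA]
    have havoid := ih _ (erase_ssubset hiU) g (empty_subset _)
    have hcontain := ih _ (erase_ssubset hiU) g (erase_subset_erase i hAU)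
    rw [sum_empty] at havoid
    rw [hsum] at hcontain
    have hcard : #(U.erase i) + 1 = #U := card_erase_add_one hiU
    calc
      2 ^ (#U + 1 - d) = 2 ^ (#(U.erase i) + 1 - d) + 2 ^ (#(U.erase i) + 1 - d) := by
        rw [hcard, Nat.sub_add_comm hle, pow_succ, mul_two]
      _ ≤ #(subsetsWithSum g (U.erase i) 0) + #(subsetsWithSum g (U.erase i) (0 - g i)) :=
        add_le_add havoid hcontain
      _ = #(subsetsWithSum g U 0) := by
        rw [← card_subsetsWithSum_insert g (notMem_erase i U), insert_erase hiU]

theorem natCard_sum_mem_eq_card_subsetsWithSum {ι G : Type*} [Fintype ι] [AddCommGroup G]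
    (X : AddSubgroup G) [DecidableEq (G ⧸ X)] (T : ι → G) :
    Nat.card {S : Finset ι // ∑ i ∈ S, T i ∈ X} =
      #(subsetsWithSum (fun i => (T i : G ⧸ X)) univ 0) := by
  refine Nat.subtype_card _ fun S => ?_
  rw [mem_subsetsWithSum, ← QuotientAddGroup.eq_zero_iff, QuotientAddGroup.mk_sum]
  exact and_iff_right (subset_univ S)

theorem stmt16_general {ι G : Type*} [Fintype ι] [AddCommGroup G] (X : AddSubgroup G) {d : ℕ}
    (hd : IsDavenportBound (G ⧸ X) d) (T : ι → G) :
    2 ^ (Fintype.card ι + 1 - d) ≤ Nat.card {S : Finset ι // ∑ i ∈ S, T i ∈ X} := by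
  classical
  rw [natCard_sum_mem_eq_card_subsetsWithSum]
  exact hd.two_pow_le_card_subsetsWithSum (fun i => (T i : G ⧸ X)) (empty_subset univ)

theorem stmt16 {G : Type*} [AddCommGroup G] [Finite G] (X : AddSubgroup G)
    (d : ℕ) (hd : 0 < d)
    (hD : ∀ f : Fin d → G ⧸ X, ∃ S : Finset (Fin d), S.Nonempty ∧ ∑ i ∈ S, f i = 0)
    (ℓ : ℕ) (T : Fin ℓ → G) :
    2 ^ (ℓ + 1 - d) ≤ Nat.card {S : Finset (Fin ℓ) // ∑ i ∈ S, T i ∈ X} := by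
  simpa only [Fintype.card_fin] using stmt16_general X hD T
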